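/- Upper estimate for the distance between levels of generalized Margulis domains (Proposition 4.7): Let P0, r0, δ > 0 and 0 < ε1 ≤ ε2. Then there exists a constant K0 > 0, depending only on P0, r0, δ, ε1 and ε2, such that for every δ-hyperbolic GCB-space (X,σ) which is P0-packed at scale r0, every non-elliptic σ-isometry g of X with ℳ_{ε1}(g) ≠ ∅, and every point x ∈ ℳ_{ε2}(g), one has d(x, ℳ_{ε1}(g)) ≤ K0. -/

import Mathlib

open Metric Filter

/-- Four-points condition for `δ`-hyperbolicity. -/
def IsDeltaHyperbolic (X : Type*) [MetricSpace X] (δ : ℝ) : Prop :=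
  ∀ x y z w : X,
    dist x y + dist z w ≤ max (dist x z + dist y w) (dist x w + dist y z) + 2 * δ

/-- `X` is `P₀`-packed at scale `r₀`: any subset of a closed ball of radius `3r₀` whose
points are pairwise at distance `> 2r₀` has cardinality at most `P₀`. -/
def IsPacked (X : Type*) [MetricSpace X] (P₀ r₀ : ℝ) : Prop :=
  ∀ x : X, ∀ S : Finset X, (↑S ⊆ closedBall x (3 * r₀)) →
    (∀ a ∈ S, ∀ b ∈ S, a ≠ b → 2 * r₀ < dist a b) → (S.card : ℝ) ≤ P₀

/-- A geodesically complete, convex, consistent, reversible geodesic bicombing on `X`.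
Together with completeness of `X` this is the notion of GCB-space. -/
structure IsGCB {X : Type*} [MetricSpace X] (σ : X → X → ℝ → X) : Prop where
  source : ∀ x y : X, σ x y 0 = x
  target : ∀ x y : X, σ x y 1 = y
  geodesic : ∀ x y : X, ∀ t ∈ Set.Icc (0:ℝ) 1, ∀ t' ∈ Set.Icc (0:ℝ) 1,
    dist (σ x y t) (σ x y t') = |t - t'| * dist x y
  convex : ∀ x y x' y' : X,
    ConvexOn ℝ (Set.Icc (0:ℝ) 1) fun t => dist (σ x y t) (σ x' y' t)
  consistent : ∀ x y : X, ∀ s t l : ℝ, 0 ≤ s → s ≤ t → t ≤ 1 → l ∈ Set.Icc (0:ℝ) 1 →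
    σ (σ x y s) (σ x y t) l = σ x y ((1 - l) * s + l * t)
  reversible : ∀ x y : X, ∀ t ∈ Set.Icc (0:ℝ) 1, σ x y t = σ y x (1 - t)
  geodComplete : ∀ x y : X, ∃ γ : ℝ → X, Isometry γ ∧
    (∀ s t : ℝ, s ≤ t → ∀ l ∈ Set.Icc (0:ℝ) 1, σ (γ s) (γ t) l = γ (s + l * (t - s))) ∧
    (∀ t ∈ Set.Icc (0:ℝ) 1, σ x y t = γ (t * dist x y))

/-- `g` is a `σ`-isometry: a surjective isometry preserving the bicombing `σ`. -/
def IsSigmaIsometry {X : Type*} [MetricSpace X] (σ : X → X → ℝ → X) (g : X ≃ᵢ X) : Prop :=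
  ∀ x y : X, ∀ t ∈ Set.Icc (0:ℝ) 1, g (σ x y t) = σ (g x) (g y) t

/-- A group of isometries is discrete if for every `x` and `R` only finitely many of its
elements displace `x` at most `R`. -/
def IsDiscreteSubgroup {X : Type*} [MetricSpace X] (Γ : Subgroup (X ≃ᵢ X)) : Prop :=
  ∀ x : X, ∀ R : ℝ, {g : X ≃ᵢ X | g ∈ Γ ∧ dist x (g x) ≤ R}.Finite

/-- A group is virtually nilpotent if it has a nilpotent subgroup of finite index. -/
def IsVirtuallyNilpotent (G : Type*) [Group G] : Prop :=
  ∃ H : Subgroup G, H.FiniteIndex ∧ Group.IsNilpotent H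

/-- `Γ` is non-elementary: it contains two elements generating a subgroup that is not
virtually nilpotent. -/
def IsNonElementary {X : Type*} [MetricSpace X] (Γ : Subgroup (X ≃ᵢ X)) : Prop :=
  ∃ a b : X ≃ᵢ X, a ∈ Γ ∧ b ∈ Γ ∧
    ¬ IsVirtuallyNilpotent ↥(Subgroup.closure ({a, b} : Set (X ≃ᵢ X)))

/-- An isometry is non-elliptic if its orbits are unbounded. -/
def IsNonElliptic {X : Type*} [MetricSpace X] (g : X ≃ᵢ X) : Prop :=
  ∀ x : X, ¬ Bornology.IsBounded (Set.range fun n : ℤ => (g ^ n) x)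

/-- The `r`-almost stabilizer `Γ_r(x)`, generated by the elements of `Γ` displacing `x`
at most `r`. -/
def almostStabilizer {X : Type*} [MetricSpace X] (Γ : Subgroup (X ≃ᵢ X)) (r : ℝ) (x : X) :
    Subgroup (X ≃ᵢ X) :=
  Subgroup.closure {g : X ≃ᵢ X | g ∈ Γ ∧ dist x (g x) ≤ r}

/-- The nilpotence radius of `Γ` at `x`. -/
noncomputable def nilrad {X : Type*} [MetricSpace X] (Γ : Subgroup (X ≃ᵢ X)) (x : X) : ℝ :=
  sSup {r : ℝ | 0 ≤ r ∧ IsVirtuallyNilpotent ↥(almostStabilizer Γ r x)}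

/-- The Margulis domain `M_ε(g)`. -/
def margulisDomain {X : Type*} [MetricSpace X] (g : X ≃ᵢ X) (ε : ℝ) : Set X :=
  {x : X | dist x (g x) ≤ ε}

/-- The generalized Margulis domain `ℳ_ε(g) = ⋃_{i ≠ 0} M_ε(gⁱ)`. -/
def genMargulisDomain {X : Type*} [MetricSpace X] (g : X ≃ᵢ X) (ε : ℝ) : Set X :=
  ⋃ i ∈ {i : ℤ | i ≠ 0}, margulisDomain (g ^ i) ε

/-- `f` parameterizes a geodesic segment from `x` to `y` on `[0, dist x y]`. -/
def IsGeodesicFrom {X : Type*} [MetricSpace X] (f : ℝ → X) (x y : X) : Prop :=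
  f 0 = x ∧ f (dist x y) = y ∧
    ∀ s ∈ Set.Icc 0 (dist x y), ∀ t ∈ Set.Icc 0 (dist x y), dist (f s) (f t) = |s - t|

/-- `X` is a geodesic space. -/
def IsGeodesicSpace (X : Type*) [MetricSpace X] : Prop :=
  ∀ x y : X, ∃ f : ℝ → X, IsGeodesicFrom f x y

/-- `C` is `lam`-quasiconvex: any two of its points are joined by a geodesic contained in
the closed `lam`-neighbourhood of `C`. -/
def IsQuasiconvex {X : Type*} [MetricSpace X] (lam : ℝ) (C : Set X) : Prop :=
  ∀ x ∈ C, ∀ y ∈ C, ∃ f : ℝ → X, IsGeodesicFrom f x y ∧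
    ∀ t ∈ Set.Icc 0 (dist x y), infDist (f t) C ≤ lam

/-- `C` is a convex subset: any two of its points are joined by a geodesic inside `C`. -/
def IsConvexSubset {X : Type*} [MetricSpace X] (C : Set X) : Prop :=
  ∀ x ∈ C, ∀ y ∈ C, ∃ f : ℝ → X, IsGeodesicFrom f x y ∧
    ∀ t ∈ Set.Icc 0 (dist x y), f t ∈ C

/-- Arc-length concatenation of three paths, of respective lengths `d₁`, `d₂` and the rest. -/
noncomputable def concatPath {X : Type*} (d₁ d₂ : ℝ) (f₁ f₂ f₃ : ℝ → X) : ℝ → X :=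
  fun t => if t ≤ d₁ then f₁ t else if t ≤ d₁ + d₂ then f₂ (t - d₁) else f₃ (t - d₁ - d₂)

/-!
Let `h = gʲ` be a power of `g` displacing `x` by at most `ε₂`, let `f = gⁱ` be a power displacing
some point `y` by at most `ε₁`, and fix a small `l > 0`.

* If `h` displaces some point `y'` by at most `l`, take the point `p` of the geodesic from `x` to
  `y'` at bounded, sufficiently large distance from `x`. By hyperbolicity the first `N` iterates
  `hᵏ p` stay in a ball of fixed radius around `p`, so by packing two of them are `ε₁`-close: a
  nontrivial power of `h` displaces `p` by at most `ε₁`.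
* Otherwise every displacement of `h` is at least `l`. Convexity makes the displacement double along
  squares, so a bounded power `H` of `h` displaces every point by more than `δ`. Hyperbolicity then
  bounds the Gromov product at `x` of two arbitrarily far points `H⁻ᴹ x` and `Hᴹ⁺¹ x`, hence that of
  `H⁻ᴹ y` and `Hᴹ⁺¹ y`, and the geodesic between the latter passes near `x`. Since `f` commutes
  with `H`, both endpoints are displaced by at most `ε₁` under `f`, and by convexity so is every
  point of that geodesic.
-/

section Bicombing

variable {X : Type*} [MetricSpace X] {σ : X → X → ℝ → X}

lemma IsGCB.exists_dist_eq (hσ : IsGCB σ) {x y : X} {r : ℝ} (hr : 0 ≤ r) (hxy : r ≤ dist x y) :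
    ∃ t ∈ Set.Icc (0 : ℝ) 1,
      dist x (σ x y t) = r ∧ dist (σ x y t) y = dist x y - r := by
  have hmul : r / dist x y * dist x y = r :=
    div_mul_cancel_of_imp fun h => le_antisymm (h ▸ hxy) hr
  have ht : r / dist x y ∈ Set.Icc (0 : ℝ) 1 :=
    ⟨div_nonneg hr dist_nonneg, div_le_one_of_le₀ hxy dist_nonneg⟩
  refine ⟨r / dist x y, ht, ?_, ?_⟩
  · have h := hσ.geodesic x y 0 (Set.left_mem_Icc.2 zero_le_one) _ ht
    rwa [hσ.source, zero_sub, abs_neg, abs_of_nonneg ht.1, hmul] at h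
  · have h := hσ.geodesic x y _ ht 1 (Set.right_mem_Icc.2 zero_le_one)
    rwa [hσ.target, abs_sub_comm, abs_of_nonneg (sub_nonneg.2 ht.2), sub_mul, one_mul, hmul] at h

lemma IsGCB.exists_dist_le_and_dist_le (hσ : IsGCB σ) {x y : X} {R r : ℝ} (hR : 0 ≤ R)
    (hr : 0 ≤ r) (hxy : dist x y ≤ R + r) : ∃ z, dist x z ≤ R ∧ dist z y ≤ r := by
  rcases le_total (dist x y) R with h | h
  · exact ⟨y, h, (dist_self y).trans_le hr⟩
  · obtain ⟨t, -, hx, hy⟩ := hσ.exists_dist_eq hR h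
    exact ⟨σ x y t, hx.le, by linarith⟩

lemma IsGCB.exists_dilation (hσ : IsGCB σ) {c : ℝ} (hc : 1 ≤ c) (x y : X) :
    ∃ z, dist x z = c * dist x y ∧ σ x z c⁻¹ = y := by
  obtain ⟨γ, hγ, hline, hsegment⟩ := hσ.geodComplete x y
  have hγ0 : γ 0 = x := by
    simpa [hσ.source] using (hsegment 0 (Set.left_mem_Icc.2 zero_le_one)).symm
  have hγ1 : γ (dist x y) = y := by
    simpa [hσ.target] using (hsegment 1 (Set.right_mem_Icc.2 zero_le_one)).symm
  have hc0 : 0 < c := zero_lt_one.trans_le hc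
  have hcd : 0 ≤ c * dist x y := by positivity
  refine ⟨γ (c * dist x y), ?_, ?_⟩
  · rw [← hγ0, hγ.dist_eq, hγ0, dist_zero_left, Real.norm_of_nonneg hcd]
  · have h := hline 0 (c * dist x y) hcd c⁻¹ ⟨inv_nonneg.2 hc0.le, inv_le_one_of_one_le₀ hc⟩
    rwa [hγ0, zero_add, sub_zero, inv_mul_cancel_left₀ hc0.ne', hγ1] at h

lemma IsGCB.dist_le_mul_of_common_source (hσ : IsGCB σ) (x y z : X) {t : ℝ}
    (ht : t ∈ Set.Icc (0 : ℝ) 1) : dist (σ x y t) (σ x z t) ≤ t * dist y z := by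
  have h := (hσ.convex x y x z).2 (Set.left_mem_Icc.2 zero_le_one)
    (Set.right_mem_Icc.2 zero_le_one) (sub_nonneg.2 ht.2) ht.1 (sub_add_cancel 1 t)
  simpa [hσ.source, hσ.target] using h

end Bicombing

section Packing

/-- Every set of points of a closed ball of radius `R` in `X` with pairwise distances greater than
`ε` has at most `P` elements. This is the packing condition at an arbitrary pair of scales:
`IsPacked X P₀ r₀` is the case `R = 3 * r₀`, `ε = 2 * r₀`. -/
def HasPackingBound (X : Type*) [MetricSpace X] (R ε P : ℝ) : Prop :=
  ∀ x : X, ∀ S : Finset X, (S : Set X) ⊆ closedBall x R →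
    (S : Set X).Pairwise (fun a b => ε < dist a b) → (S.card : ℝ) ≤ P

variable {X : Type*} [MetricSpace X] {σ : X → X → ℝ → X} {R ε P : ℝ}

lemma IsPacked.hasPackingBound {r₀ : ℝ} (hX : IsPacked X P r₀) :
    HasPackingBound X (3 * r₀) (2 * r₀) P :=
  fun x S hS hsep => hX x S hS fun _ ha _ hb => hsep ha hb

lemma HasPackingBound.nonneg (h : HasPackingBound X R ε P) (x : X) : 0 ≤ P := by
  simpa using h x ∅ (by simp) (by simp)

lemma HasPackingBound.mono {R' ε' : ℝ} (h : HasPackingBound X R ε P) (hR : R' ≤ R)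
    (hε : ε ≤ ε') : HasPackingBound X R' ε' P :=
  fun x S hS hsep => h x S (hS.trans (closedBall_subset_closedBall hR))
    (hsep.mono' fun _ _ hab => hε.trans_lt hab)

lemma hasPackingBound_zero_one : HasPackingBound X 0 ε 1 := by
  intro x S hS _
  rw [closedBall_zero, ← Finset.coe_singleton, Finset.coe_subset] at hS
  exact_mod_cast Finset.card_le_card hS

lemma HasPackingBound.exists_dist_le_of_lt {N : ℕ} (h : HasPackingBound X R ε P) (hPN : P < N)
    (hε : 0 ≤ ε) {u : ℕ → X} {x : X} (hu : ∀ k < N, dist (u k) x ≤ R) :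
    ∃ m n, m < n ∧ dist (u m) (u n) ≤ ε := by
  classical
  by_contra! hfar
  have hsep : ∀ m n, m ≠ n → ε < dist (u m) (u n) := fun m n hmn =>
    hmn.lt_or_gt.elim (hfar m n) fun hnm => dist_comm (u n) (u m) ▸ hfar n m hnm
  have hinj : Function.Injective u := fun m n hmn => by
    by_contra hne
    exact (hsep m n hne).not_ge (by rwa [hmn, dist_self])
  have hcard := h x ((Finset.range N).image u)
    (by simpa [Set.subset_def] using hu)
    (by
      simp only [Finset.coe_image]
      rintro _ ⟨m, -, rfl⟩ _ ⟨n, -, rfl⟩ hmn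
      exact hsep m n (ne_of_apply_ne u hmn))
  rw [Finset.card_image_of_injective _ hinj, Finset.card_range] at hcard
  exact hPN.not_ge hcard

lemma exists_subset_pairwise_lt_dist_and_forall_exists_dist_le (S : Finset X) (hε : 0 ≤ ε) :
    ∃ T ⊆ S, (T : Set X).Pairwise (fun a b => ε < dist a b) ∧
      ∀ a ∈ S, ∃ t ∈ T, dist a t ≤ ε := by
  classical
  let IsSep : Finset X → Prop := fun T => (T : Set X).Pairwise fun a b => ε < dist a b
  obtain ⟨T, hT, hmax⟩ := (S.powerset.filter IsSep).exists_max_image Finset.card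
    ⟨∅, by simp [IsSep]⟩
  obtain ⟨hTS, hTsep⟩ : T ⊆ S ∧ IsSep T := by simpa using hT
  refine ⟨T, hTS, hTsep, fun a ha => ?_⟩
  by_contra! hfar
  have haT : a ∉ T := fun haT => (hfar a haT).not_ge (by rwa [dist_self])
  have hinsert : IsSep (insert a T) := by
    simp only [IsSep, Finset.coe_insert]
    exact hTsep.insert fun t ht _ => ⟨hfar t ht, dist_comm a t ▸ hfar t ht⟩
  have hcard := hmax (insert a T)
    (Finset.mem_filter.2 ⟨Finset.mem_powerset.2 (Finset.insert_subset ha hTS), hinsert⟩)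
  rw [Finset.card_insert_of_notMem haT] at hcard
  exact Nat.not_succ_le_self _ hcard

lemma IsGCB.hasPackingBound_add (hσ : IsGCB σ) {r s A : ℝ} (hR : 0 ≤ R) (hr : 0 ≤ r)
    (hs : 0 ≤ s) (hA : HasPackingBound X R s A) (hP : HasPackingBound X (r + s) ε P) :
    HasPackingBound X (R + r) ε (A * P) := by
  classical
  intro x S hS hsep
  have hnear : ∀ a ∈ S, ∃ z, dist x z ≤ R ∧ dist z a ≤ r := fun a ha =>
    hσ.exists_dist_le_and_dist_le hR hr (mem_closedBall'.1 (hS ha))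
  have : Nonempty X := ⟨x⟩
  choose! f hfx hfa using hnear
  obtain ⟨T, hTS, hTsep, hTcover⟩ :=
    exists_subset_pairwise_lt_dist_and_forall_exists_dist_le (S.image f) hs
  have hT : (T.card : ℝ) ≤ A := by
    refine hA x T (fun t ht => ?_) hTsep
    obtain ⟨a, ha, rfl⟩ := Finset.mem_image.1 (hTS ht)
    exact mem_closedBall'.2 (hfx a ha)
  choose! g hgT hg using fun a (ha : a ∈ S) => hTcover (f a) (Finset.mem_image_of_mem f ha)
  have hfiber : ∀ t ∈ T, ((S.filter (g · = t)).card : ℝ) ≤ P := by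
    refine fun t _ => hP t _ (fun a ha => ?_)
      (hsep.mono (Finset.coe_subset.2 (Finset.filter_subset _ S)))
    obtain ⟨haS, rfl⟩ := Finset.mem_filter.1 ha
    rw [mem_closedBall]
    linarith [dist_triangle a (f a) (g a), dist_comm a (f a), hfa a haS, hg a haS]
  have hP0 := hP.nonneg x
  calc (S.card : ℝ) = ∑ t ∈ T, ((S.filter (g · = t)).card : ℝ) := by
        exact_mod_cast Finset.card_eq_sum_card_fiberwise hgT
    _ ≤ T.card * P := by simpa only [nsmul_eq_mul] using Finset.sum_le_card_nsmul T _ P hfiber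
    _ ≤ A * P := by gcongr

lemma IsGCB.hasPackingBound_nat_mul (hσ : IsGCB σ) {r s : ℝ} (hr : 0 ≤ r) (hs : 0 ≤ s)
    (h : HasPackingBound X (r + s) s P) (n : ℕ) : HasPackingBound X (n * r) s (P ^ n) := by
  induction n with
  | zero => simpa using hasPackingBound_zero_one
  | succ n ih =>
    rw [Nat.cast_succ, add_one_mul, pow_succ]
    exact hσ.hasPackingBound_add (by positivity) hr hs ih h

lemma IsGCB.hasPackingBound_of_dilate (hσ : IsGCB σ) {c : ℝ} (hc : 1 ≤ c)
    (h : HasPackingBound X (c * R) (c * ε) P) : HasPackingBound X R ε P := by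
  classical
  intro x S hS hsep
  have hc0 : 0 < c := zero_lt_one.trans_le hc
  choose f hfdist hfσ using hσ.exists_dilation hc x
  have hexpand : ∀ a b, c * dist a b ≤ dist (f a) (f b) := fun a b => by
    have hab := hσ.dist_le_mul_of_common_source x (f a) (f b)
      ⟨inv_nonneg.2 hc0.le, inv_le_one_of_one_le₀ hc⟩
    rwa [hfσ, hfσ, inv_mul_eq_div, le_div_iff₀' hc0] at hab
  have hinj : Function.Injective f := fun a b hab => by rw [← hfσ a, ← hfσ b, hab]
  rw [← Finset.card_image_of_injective S hinj]
  apply h x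
  · rw [Finset.coe_image]
    rintro _ ⟨a, ha, rfl⟩
    rw [mem_closedBall', hfdist]
    exact mul_le_mul_of_nonneg_left (mem_closedBall'.1 (hS ha)) hc0.le
  · rw [Finset.coe_image]
    rintro _ ⟨a, ha, rfl⟩ _ ⟨b, hb, rfl⟩ hab
    exact (mul_lt_mul_of_pos_left (hsep ha hb (ne_of_apply_ne f hab)) hc0).trans_le (hexpand a b)

lemma IsGCB.hasPackingBound_of_isPacked (hσ : IsGCB σ) {P₀ r₀ : ℝ} (hr₀ : 0 < r₀)
    (hX : IsPacked X P₀ r₀) (R : ℝ) (hε : 0 < ε) :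
    HasPackingBound X R ε (P₀ ^ ⌈max 1 (2 * r₀ / ε) * R / r₀⌉₊) := by
  apply hσ.hasPackingBound_of_dilate (le_max_left 1 (2 * r₀ / ε))
  refine (hσ.hasPackingBound_nat_mul hr₀.le (by positivity) ?_ _).mono
    ((div_le_iff₀ hr₀).1 (Nat.le_ceil _)) ((div_le_iff₀ hε).1 (le_max_right _ _))
  exact hX.hasPackingBound.mono (by linarith) le_rfl

end Packing

section Isometries

/-- The group of `σ`-isometries. -/
def sigmaIsometries {X : Type*} [MetricSpace X] (σ : X → X → ℝ → X) : Subgroup (X ≃ᵢ X) where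
  carrier := {g | IsSigmaIsometry σ g}
  one_mem' := fun _ _ _ _ => rfl
  mul_mem' := fun {a b} ha hb x y t ht => by
    simp only [IsometryEquiv.mul_apply, hb x y t ht, ha _ _ t ht]
  inv_mem' := fun {a} ha x y t ht => a.injective <| by
    simp only [ha _ _ t ht, IsometryEquiv.apply_inv_self]

variable {X : Type*} [MetricSpace X] {σ : X → X → ℝ → X}

lemma dist_pow_apply_pow_add_apply (h : X ≃ᵢ X) (x : X) (m n : ℕ) :
    dist ((h ^ m) x) ((h ^ (m + n)) x) = dist x ((h ^ n) x) := by
  rw [pow_add, IsometryEquiv.mul_apply, (h ^ m).dist_eq]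

lemma dist_pow_succ_apply_le (h : X ≃ᵢ X) (x : X) (n : ℕ) :
    dist x ((h ^ (n + 1)) x) ≤ dist x ((h ^ n) x) + dist x (h x) := by
  simpa [dist_pow_apply_pow_add_apply] using dist_triangle x ((h ^ n) x) ((h ^ (n + 1)) x)

lemma dist_pow_apply_le (h : X ≃ᵢ X) (x : X) (n : ℕ) :
    dist x ((h ^ n) x) ≤ n * dist x (h x) := by
  induction n with
  | zero => simp
  | succ n ih =>
    push_cast
    linarith [dist_pow_succ_apply_le h x n]

lemma dist_inv_apply_apply (a b : X ≃ᵢ X) (x y : X) :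
    dist (a⁻¹ x) (b y) = dist x ((a * b) y) := by
  rw [← a.dist_eq, IsometryEquiv.apply_inv_self, IsometryEquiv.mul_apply]

lemma dist_inv_apply (a : X ≃ᵢ X) (x : X) : dist x (a⁻¹ x) = dist x (a x) := by
  simpa [dist_comm] using dist_inv_apply_apply a 1 x x

lemma dist_apply_apply_of_commute {a f : X ≃ᵢ X} (haf : Commute a f) (y : X) :
    dist (a y) (f (a y)) = dist y (f y) := by
  rw [← IsometryEquiv.mul_apply f, ← haf.eq, IsometryEquiv.mul_apply, a.dist_eq]

lemma IsGCB.dist_apply_le_max (hσ : IsGCB σ) {f : X ≃ᵢ X} (hf : IsSigmaIsometry σ f) (u v : X)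
    {t : ℝ} (ht : t ∈ Set.Icc (0 : ℝ) 1) :
    dist (σ u v t) (f (σ u v t)) ≤ max (dist u (f u)) (dist v (f v)) := by
  have h := (hσ.convex u v (f u) (f v)).le_max_of_mem_Icc (Set.left_mem_Icc.2 zero_le_one)
    (Set.right_mem_Icc.2 zero_le_one) ht
  simpa only [hσ.source, hσ.target, hf u v t ht] using h

lemma IsGCB.two_mul_le_dist_sq (hσ : IsGCB σ) {h : X ≃ᵢ X} (hh : IsSigmaIsometry σ h) {l : ℝ}
    (hl : ∀ y, l ≤ dist y (h y)) (y : X) : 2 * l ≤ dist y ((h ^ 2) y) := by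
  have ht : (1 / 2 : ℝ) ∈ Set.Icc (0 : ℝ) 1 := by norm_num
  have hrev : σ (h y) y (1 / 2) = σ y (h y) (1 / 2) := by
    rw [hσ.reversible _ _ _ ht]
    norm_num
  -- `h` maps the midpoint of `y, h y` to that of `h y, h² y`; both segments issue from `h y`.
  have hmid := hσ.dist_le_mul_of_common_source (h y) y (h (h y)) ht
  rw [hrev, ← hh _ _ _ ht] at hmid
  rw [pow_two, IsometryEquiv.mul_apply]
  linarith [hl (σ y (h y) (1 / 2))]

lemma IsGCB.two_pow_mul_le_dist_pow (hσ : IsGCB σ) {h : X ≃ᵢ X} (hh : IsSigmaIsometry σ h)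
    {l : ℝ} (hl : ∀ y, l ≤ dist y (h y)) (k : ℕ) (y : X) :
    2 ^ k * l ≤ dist y ((h ^ 2 ^ k) y) := by
  induction k generalizing y with
  | zero => simpa using hl y
  | succ k ih =>
    rw [pow_succ' (2 : ℝ), mul_assoc, pow_succ 2 k, pow_mul]
    exact hσ.two_mul_le_dist_sq ((sigmaIsometries σ).pow_mem hh _) ih y

lemma IsGCB.exists_add_mul_lt_dist_pow (hσ : IsGCB σ) {h : X ≃ᵢ X} (hh : IsSigmaIsometry σ h)
    {δ l : ℝ} (hδl : δ < l) (hl : ∀ y, l ≤ dist y (h y)) (x : X) (C : ℝ) :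
    ∃ n : ℕ, C + n * δ < dist x ((h ^ n) x) := by
  obtain ⟨k, hk⟩ := pow_unbounded_of_one_lt (C / (l - δ)) one_lt_two
  rw [div_lt_iff₀ (sub_pos.2 hδl)] at hk
  refine ⟨2 ^ k, ?_⟩
  push_cast
  linarith [hσ.two_pow_mul_le_dist_pow hh hl k x]

end Isometries

section Hyperbolic

variable {X : Type*} [MetricSpace X] {σ : X → X → ℝ → X} {δ : ℝ}

/-- The Gromov product `(u | v)ₓ`, based at `x`. -/
noncomputable def gromovProduct (x u v : X) : ℝ :=
  (dist x u + dist x v - dist u v) / 2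

lemma gromovProduct_comm (x u v : X) : gromovProduct x u v = gromovProduct x v u := by
  simp only [gromovProduct, add_comm (dist x u), dist_comm u v]

lemma IsDeltaHyperbolic.nonneg (hX : IsDeltaHyperbolic X δ) (x : X) : 0 ≤ δ := by
  simpa using hX x x x x

lemma IsDeltaHyperbolic.min_gromovProduct_le (hX : IsDeltaHyperbolic X δ) (x u v w : X) :
    min (gromovProduct x u w) (gromovProduct x w v) ≤ gromovProduct x u v + δ := by
  have h := hX x w u v
  simp only [gromovProduct, min_le_iff]
  rcases le_max_iff.1 (sub_le_iff_le_add.2 h) with h | h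
  · exact .inr (by linarith)
  · exact .inl (by linarith [dist_comm u w])

lemma IsDeltaHyperbolic.gromovProduct_le_of_dist_lt (hX : IsDeltaHyperbolic X δ) {x u u' v : X}
    (hu : dist u u' + gromovProduct x u v + δ < dist x u) :
    gromovProduct x u' v ≤ gromovProduct x u v + δ := by
  refine (min_le_iff.1 (hX.min_gromovProduct_le x u v u')).resolve_left (not_le.2 ?_)
  have huu' : dist x u - dist u u' ≤ gromovProduct x u u' := by
    unfold gromovProduct
    linarith [dist_triangle_right x u u']
  linarith

lemma IsGCB.exists_dist_le_gromovProduct (hσ : IsGCB σ) (hX : IsDeltaHyperbolic X δ)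
    (x u v : X) :
    ∃ t ∈ Set.Icc (0 : ℝ) 1, dist x (σ u v t) ≤ gromovProduct x u v + 2 * δ := by
  obtain ⟨t, ht, hut, htv⟩ := hσ.exists_dist_eq (x := u) (y := v) (r := gromovProduct u x v)
    (by unfold gromovProduct; linarith [dist_triangle_left x v u])
    (by unfold gromovProduct; linarith [dist_triangle u v x, dist_comm v x])
  refine ⟨t, ht, ?_⟩
  have h := hX x (σ u v t) u v
  unfold gromovProduct at hut htv ⊢
  rw [dist_comm u x] at hut htv
  rw [dist_comm (σ u v t) u] at h
  rcases le_max_iff.1 (sub_le_iff_le_add.2 h) with h | h <;> linarith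

lemma IsDeltaHyperbolic.dist_apply_le_of_dist_add_dist_eq (hX : IsDeltaHyperbolic X δ)
    {f : X → X} (hf : Isometry f) {x y p : X} (hp : dist x p + dist p y = dist x y)
    (hx : dist x (f x) ≤ 2 * dist x p) : dist p (f p) ≤ dist y (f y) + 4 * δ := by
  have hδ := hX.nonneg x
  have hpy : dist (f p) y ≤ dist p y + dist y (f y) := by
    linarith [dist_triangle_right (f p) y (f y), hf.dist_eq p y]
  have hpx : dist x (f p) ≤ dist x p + dist y (f y) + 2 * δ := by
    have h := hX x (f p) (f x) (f y)
    rw [hf.dist_eq, hf.dist_eq, hf.dist_eq, dist_comm p x] at h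
    rcases le_max_iff.1 (sub_le_iff_le_add.2 h) with h | h
    · linarith [dist_nonneg (x := y) (y := f y)]
    · linarith [dist_triangle x y (f y)]
  have h := hX p (f p) x y
  rw [dist_comm p x, dist_comm (f p) x] at h
  rcases le_max_iff.1 (sub_le_iff_le_add.2 h) with h | h <;> linarith

end Hyperbolic

section Orbits

variable {X : Type*} [MetricSpace X] {σ : X → X → ℝ → X} {δ : ℝ}

lemma IsGCB.exists_forall_dist_pow_le (hσ : IsGCB σ) (hX : IsDeltaHyperbolic X δ) (h : X ≃ᵢ X)
    (x y : X) (N : ℕ) :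
    ∃ p, dist x p ≤ N * dist x (h x) / 2 ∧
      ∀ k < N, dist p ((h ^ k) p) ≤ N * dist y (h y) + 4 * δ := by
  have hpow : ∀ z, ∀ k < N, dist z ((h ^ k) z) ≤ N * dist z (h z) := fun z k hk =>
    (dist_pow_apply_le h z k).trans (by gcongr)
  rcases le_total (dist x y) (N * dist x (h x) / 2) with hxy | hxy
  · exact ⟨y, hxy, fun k hk => by linarith [hpow y k hk, hX.nonneg x]⟩
  · obtain ⟨t, -, hxt, hty⟩ := hσ.exists_dist_eq (by positivity) hxy
    refine ⟨σ x y t, hxt.le, fun k hk => ?_⟩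
    refine (hX.dist_apply_le_of_dist_add_dist_eq (h ^ k).isometry (by linarith) ?_).trans
      (by gcongr; exact hpow y k hk)
    linarith [hpow x k hk]

lemma IsGCB.exists_dist_pow_le (hσ : IsGCB σ) (hX : IsDeltaHyperbolic X δ) {h : X ≃ᵢ X}
    {N : ℕ} {ε P : ℝ} (hP : HasPackingBound X (ε + 4 * δ) ε P) (hPN : P < N) (hε : 0 ≤ ε)
    (x : X) {y : X} (hy : N * dist y (h y) ≤ ε) :
    ∃ p, ∃ k : ℕ, k ≠ 0 ∧ dist p ((h ^ k) p) ≤ ε ∧ dist x p ≤ N * dist x (h x) / 2 := by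
  obtain ⟨p, hxp, hp⟩ := hσ.exists_forall_dist_pow_le hX h x y N
  obtain ⟨m, n, hmn, hdist⟩ := hP.exists_dist_le_of_lt hPN hε (u := fun k => (h ^ k) p) (x := p)
    fun k hk => by
      rw [dist_comm]
      linarith [hp k hk]
  obtain ⟨k, rfl⟩ := Nat.exists_eq_add_of_le hmn.le
  exact ⟨p, k, by lia, (dist_pow_apply_pow_add_apply h p m k).symm.trans_le hdist, hxp⟩

lemma exists_lt_and_add_lt_succ {a : ℕ → ℝ} {D : ℝ} (hδ : 0 ≤ δ)
    (hstep : ∀ k, a (k + 1) ≤ a k + D) (hgrowth : ∀ C, ∃ n : ℕ, C + n * δ < a n) (B : ℝ) :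
    ∃ M, B < a M ∧ a M + δ < a (M + 1) := by
  by_contra! hslow
  have hlinear : ∀ k : ℕ, a k ≤ max (a 0) (B + D) + k * δ := by
    intro k
    induction k with
    | zero => simp
    | succ k ih =>
      push_cast
      rcases lt_or_ge B (a k) with hB | hB
      · linarith [hslow k hB]
      · have hkδ : 0 ≤ (k + 1) * δ := by positivity
        linarith [hstep k, le_max_right (a 0) (B + D)]
  obtain ⟨n, hn⟩ := hgrowth (max (a 0) (B + D))
  exact (hlinear n).not_gt hn

lemma IsDeltaHyperbolic.gromovProduct_inv_pow_pow_succ_le (hX : IsDeltaHyperbolic X δ)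
    {h : X ≃ᵢ X} {x : X} {M : ℕ} (hM : dist x ((h ^ M) x) + δ < dist x ((h ^ (M + 1)) x)) :
    gromovProduct x ((h ^ M)⁻¹ x) ((h ^ (M + 1)) x) ≤ dist x (h x) / 2 + δ := by
  have hinv_apply : dist (h x) ((h ^ M)⁻¹ x) = dist x ((h ^ (M + 1)) x) := by
    rw [dist_comm, dist_inv_apply_apply, pow_succ]
  have happly_succ : dist (h x) ((h ^ (M + 1)) x) = dist x ((h ^ M) x) := by
    rw [pow_succ', IsometryEquiv.mul_apply, h.dist_eq]
  have hfour := hX x ((h ^ (M + 1)) x) (h x) ((h ^ M)⁻¹ x)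
  rw [dist_comm ((h ^ (M + 1)) x), dist_comm ((h ^ (M + 1)) x), dist_inv_apply, hinv_apply,
    happly_succ] at hfour
  rw [gromovProduct, dist_inv_apply]
  rcases le_max_iff.1 (sub_le_iff_le_add.2 hfour) with hfour | hfour <;>
    linarith [hX.nonneg x]

lemma IsGCB.exists_dist_apply_le_of_commute (hσ : IsGCB σ) (hX : IsDeltaHyperbolic X δ)
    {h f : X ≃ᵢ X} (hf : IsSigmaIsometry σ f) (hhf : Commute h f) {x : X}
    (hgrowth : ∀ C, ∃ n : ℕ, C + n * δ < dist x ((h ^ n) x)) (y : X) :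
    ∃ p, dist p (f p) ≤ dist y (f y) ∧ dist x p ≤ dist x (h x) / 2 + 5 * δ := by
  have hδ := hX.nonneg x
  obtain ⟨M, hB, hM⟩ := exists_lt_and_add_lt_succ hδ (dist_pow_succ_apply_le h x) hgrowth
    (dist x y + dist x (h x) / 2 + 3 * δ)
  have hinv := dist_inv_apply (h ^ M) x
  have hxx := hX.gromovProduct_inv_pow_pow_succ_le hM
  have hyx : gromovProduct x ((h ^ M)⁻¹ y) ((h ^ (M + 1)) x) ≤ dist x (h x) / 2 + 2 * δ := by
    have hmove := hX.gromovProduct_le_of_dist_lt (x := x) (u := (h ^ M)⁻¹ x) (u' := (h ^ M)⁻¹ y)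
      (v := (h ^ (M + 1)) x) (by rw [IsometryEquiv.dist_eq]; linarith)
    linarith
  have hyy : gromovProduct x ((h ^ M)⁻¹ y) ((h ^ (M + 1)) y) ≤ dist x (h x) / 2 + 3 * δ := by
    rw [gromovProduct_comm] at hyx ⊢
    have hmove := hX.gromovProduct_le_of_dist_lt (x := x) (u := (h ^ (M + 1)) x)
      (u' := (h ^ (M + 1)) y) (v := (h ^ M)⁻¹ y) (by rw [IsometryEquiv.dist_eq]; linarith)
    linarith
  obtain ⟨t, ht, hxt⟩ :=
    hσ.exists_dist_le_gromovProduct hX x ((h ^ M)⁻¹ y) ((h ^ (M + 1)) y)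
  refine ⟨_, (hσ.dist_apply_le_max hf _ _ ht).trans (max_le ?_ ?_), hxt.trans (by linarith)⟩
  · exact (dist_apply_apply_of_commute (hhf.pow_left M).inv_left y).le
  · exact (dist_apply_apply_of_commute (hhf.pow_left (M + 1)) y).le

lemma IsGCB.exists_dist_pow_le_or_dist_apply_le (hσ : IsGCB σ) (hX : IsDeltaHyperbolic X δ)
    {h f : X ≃ᵢ X} (hh : IsSigmaIsometry σ h) (hf : IsSigmaIsometry σ f) (hhf : Commute h f)
    {N s : ℕ} {ε P l : ℝ} (hε : 0 ≤ ε) (hP : HasPackingBound X (ε + 4 * δ) ε P) (hPN : P < N)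
    (hNl : N * l ≤ ε) (hs : δ < 2 ^ s * l) {y : X} (hy : dist y (f y) ≤ ε) (x : X) :
    ∃ p, ((∃ k : ℕ, k ≠ 0 ∧ dist p ((h ^ k) p) ≤ ε) ∨ dist p (f p) ≤ ε) ∧
      dist x p ≤ (N + 2 ^ s) / 2 * dist x (h x) + 5 * δ := by
  have hδ := hX.nonneg x
  by_cases hsmall : ∃ z, dist z (h z) ≤ l
  · obtain ⟨z, hz⟩ := hsmall
    obtain ⟨p, k, hk, hpk, hxp⟩ := hσ.exists_dist_pow_le hX hP hPN hε x (y := z)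
      (le_trans (by gcongr) hNl)
    have hs0 : 0 ≤ 2 ^ s * dist x (h x) := by positivity
    exact ⟨p, .inl ⟨k, hk, hpk⟩, by linarith⟩
  · push Not at hsmall
    have hgrowth := hσ.exists_add_mul_lt_dist_pow ((sigmaIsometries σ).pow_mem hh (2 ^ s)) hs
      (hσ.two_pow_mul_le_dist_pow hh (fun z => (hsmall z).le) s) x
    obtain ⟨p, hpf, hxp⟩ :=
      hσ.exists_dist_apply_le_of_commute hX hf (hhf.pow_left (2 ^ s)) hgrowth y
    have hpow := dist_pow_apply_le h x (2 ^ s)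
    push_cast at hpow
    have hN0 : 0 ≤ N * dist x (h x) := by positivity
    exact ⟨p, .inr (hpf.trans hy), by linarith⟩

end Orbits

lemma mem_genMargulisDomain {X : Type*} [MetricSpace X] {g : X ≃ᵢ X} {ε : ℝ} {x : X} :
    x ∈ genMargulisDomain g ε ↔ ∃ i : ℤ, i ≠ 0 ∧ dist x ((g ^ i) x) ≤ ε := by
  simp [genMargulisDomain, margulisDomain]

theorem IsGCB.exists_mem_genMargulisDomain_dist_le {X : Type*} [MetricSpace X]
    {σ : X → X → ℝ → X} (hσ : IsGCB σ) {δ : ℝ} (hX : IsDeltaHyperbolic X δ) {g : X ≃ᵢ X}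
    (hg : IsSigmaIsometry σ g) {N s : ℕ} {ε₁ ε₂ P l : ℝ}
    (hP : HasPackingBound X (ε₁ + 4 * δ) ε₁ P) (hPN : P < N) (hNl : N * l ≤ ε₁)
    (hs : δ < 2 ^ s * l) (hne : (genMargulisDomain g ε₁).Nonempty) {x : X}
    (hx : x ∈ genMargulisDomain g ε₂) :
    ∃ p ∈ genMargulisDomain g ε₁, dist x p ≤ (N + 2 ^ s) / 2 * ε₂ + 5 * δ := by
  obtain ⟨y, hy⟩ := hne
  obtain ⟨i, hi, hy⟩ := mem_genMargulisDomain.1 hy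
  obtain ⟨j, hj, hx⟩ := mem_genMargulisDomain.1 hx
  have hpow : ∀ m : ℤ, IsSigmaIsometry σ (g ^ m) := (sigmaIsometries σ).zpow_mem hg
  obtain ⟨p, hp, hxp⟩ := hσ.exists_dist_pow_le_or_dist_apply_le hX (hpow j) (hpow i)
    (Commute.zpow_zpow_self g j i) (dist_nonneg.trans hy) hP hPN hNl hs hy x
  refine ⟨p, mem_genMargulisDomain.2 ?_, hxp.trans (by gcongr)⟩
  rcases hp with ⟨k, hk, hpk⟩ | hpi
  · exact ⟨j * k, mul_ne_zero hj (Nat.cast_ne_zero.2 hk), by rwa [zpow_mul, zpow_natCast]⟩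
  · exact ⟨i, hi, hpi⟩

theorem genMargulis_upper_estimate_general (P₀ r₀ δ ε₁ ε₂ : ℝ) (hr₀ : 0 < r₀) (hε₁ : 0 < ε₁) :
    ∃ K₀ : ℝ, 0 < K₀ ∧
      ∀ (X : Type*) [MetricSpace X] (σ : X → X → ℝ → X),
        IsGCB σ → IsDeltaHyperbolic X δ → IsPacked X P₀ r₀ →
        ∀ g : X ≃ᵢ X, IsSigmaIsometry σ g → (genMargulisDomain g ε₁).Nonempty →
          ∀ x ∈ genMargulisDomain g ε₂, infDist x (genMargulisDomain g ε₁) ≤ K₀ := by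
  let P := P₀ ^ ⌈max 1 (2 * r₀ / ε₁) * (ε₁ + 4 * δ) / r₀⌉₊
  obtain ⟨N, hN⟩ := exists_nat_gt (max 0 P)
  obtain ⟨hN0, hPN⟩ := max_lt_iff.1 hN
  have hNl : N * (ε₁ / N) = ε₁ := mul_div_cancel₀ ε₁ hN0.ne'
  obtain ⟨s, hs⟩ := pow_unbounded_of_one_lt (δ / (ε₁ / N)) one_lt_two
  rw [div_lt_iff₀ (div_pos hε₁ hN0)] at hs
  refine ⟨max 1 ((N + 2 ^ s) / 2 * ε₂ + 5 * δ), by positivity, ?_⟩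
  intro X _ σ hσ hX hpacked g hg hne x hx
  obtain ⟨p, hp, hxp⟩ := hσ.exists_mem_genMargulisDomain_dist_le hX hg
    (hσ.hasPackingBound_of_isPacked hr₀ hpacked _ hε₁) hPN hNl.le hs hne hx
  exact (infDist_le_dist_of_mem hp).trans (hxp.trans (le_max_right _ _))

/-- **Proposition 4.7**: upper estimate for the distance between levels of generalized
Margulis domains. -/
theorem genMargulis_upper_estimate
    (P₀ r₀ δ ε₁ ε₂ : ℝ) (hP₀ : 0 < P₀) (hr₀ : 0 < r₀) (hδ : 0 < δ)
    (hε₁ : 0 < ε₁) (h₁₂ : ε₁ ≤ ε₂) :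
    ∃ K₀ : ℝ, 0 < K₀ ∧
      ∀ (X : Type*) [MetricSpace X] [CompleteSpace X] (σ : X → X → ℝ → X),
        IsGCB σ → IsDeltaHyperbolic X δ → IsPacked X P₀ r₀ →
        ∀ g : X ≃ᵢ X, IsSigmaIsometry σ g → IsNonElliptic g →
          (genMargulisDomain g ε₁).Nonempty →
          ∀ x ∈ genMargulisDomain g ε₂,
            infDist x (genMargulisDomain g ε₁) ≤ K₀ := by
  obtain ⟨K₀, hK₀, hK⟩ := genMargulis_upper_estimate_general P₀ r₀ δ ε₁ ε₂ hr₀ hε₁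
  exact ⟨K₀, hK₀, fun X _ _ σ hσ hX hpacked g hg _ => hK X σ hσ hX hpacked g hg⟩
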